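/- Let α ∈ (0,1) be irrational with unbounded partial quotients (a_k), and set ℓ_e := liminf_{k→∞} (Σ_{m=1,…,k, m even} a_m)/(Σ_{m=1}^{k} a_m) and ℓ_o := liminf_{k→∞} (Σ_{m=1,…,k, m odd} a_m)/(Σ_{m=1}^{k} a_m). If ℓ_e² + ℓ_o² > 0 and limsup_{k→∞} k/(Σ_{m=1}^{k} a_m) = 0, then (1/4)·max{ℓ_e, ℓ_o} ≤ limsup_{n→∞} [ n·D_n*(α) / Σ_{m=1}^{ord(n−1)+1} a_m ] ≤ 1/4. -/

import Mathlib

open Filter Finset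

noncomputable section

/-- The Gauss map `G(x) = {1/x}` (with `G(0) = 0`, since `0⁻¹ = 0` in Lean). -/
def gaussMap (x : ℝ) : ℝ := Int.fract x⁻¹

/-- `α_m = G^m(α)`. -/
def gaussIter (α : ℝ) (m : ℕ) : ℝ := gaussMap^[m] α

/-- The `h`-th partial quotient `a_h` of `α` (meaningful for `h ≥ 1`):
`a_h = ⌊(G^{h-1} α)⁻¹⌋`. -/
def pq (α : ℝ) (h : ℕ) : ℕ := ⌊(gaussIter α (h - 1))⁻¹⌋₊

/-- Denominators `q_n` of the convergents of `α`:
`q_0 = 1`, `q_1 = a_1`, `q_{n+2} = a_{n+2} q_{n+1} + q_n`. -/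
def qden (α : ℝ) : ℕ → ℕ
  | 0 => 1
  | 1 => pq α 1
  | (n + 2) => pq α (n + 2) * qden α (n + 1) + qden α n

/-- Numerators `p_n` of the convergents of `α`:
`p_0 = 0`, `p_1 = 1`, `p_{n+2} = a_{n+2} p_{n+1} + p_n`. -/
def pnum (α : ℝ) : ℕ → ℕ
  | 0 => 0
  | 1 => 1
  | (n + 2) => pq α (n + 2) * pnum α (n + 1) + pnum α n

/-- `f_n = (-1)^n (q_n α - p_n)`. -/
def fseq (α : ℝ) (n : ℕ) : ℝ := (-1) ^ n * ((qden α n : ℝ) * α - (pnum α n : ℝ))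

/-- `r_k = min {r ≥ 0 : ⌊r α⌋ = k}`. -/
def rmin (α : ℝ) (k : ℕ) : ℕ := sInf {r : ℕ | ⌊(r : ℝ) * α⌋ = (k : ℤ)}

/-- `t_k = #{r ≥ 0 : ⌊r α⌋ = k}`. -/
def tcount (α : ℝ) (k : ℕ) : ℕ := Set.ncard {r : ℕ | ⌊(r : ℝ) * α⌋ = (k : ℤ)}

/-- `(k_j)_{j ≥ 0}`: the increasing enumeration of `{k : t_k = a_1 + 1}`. -/
def kseq (α : ℝ) (j : ℕ) : ℕ := Nat.nth (fun k => tcount α k = pq α 1 + 1) j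

/-- The gaps `g_j = r_{k_j} - r_{k_{j-1}}` (for `j ≥ 1`). -/
def gseq (γ : ℝ) (j : ℕ) : ℕ := rmin γ (kseq γ j) - rmin γ (kseq γ (j - 1))

/-- `(j_h)_{h ≥ 0}`: the increasing enumeration of those `j ≥ 1` with
`g_j = q_2 + q_1`. -/
def jbig (γ : ℝ) (h : ℕ) : ℕ :=
  Nat.nth (fun j => 1 ≤ j ∧ gseq γ j = qden γ 2 + qden γ 1) h

/-- `ᾱ_1 = G(α)/(1 - G(α))`. -/
def abar (α : ℝ) : ℝ := gaussIter α 1 / (1 - gaussIter α 1)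

/-- The Ostrowski representation `r = ∑_{h=0}^N c_h q_h` with `0 ≤ c_h ≤ a_{h+1}`,
`c_{h-1} = 0` whenever `c_h = a_{h+1}`, and `c_N > 0`; `N = ord r`. -/
def IsOstrowski (α : ℝ) (r N : ℕ) (c : ℕ → ℕ) : Prop :=
  r = ∑ h ∈ Finset.range (N + 1), c h * qden α h ∧
  (∀ h, c h ≤ pq α (h + 1)) ∧
  (∀ h, c (h + 1) = pq α (h + 2) → c h = 0) ∧
  0 < c N ∧ ∀ h, N < h → c h = 0

/-- The order `ord r` of a positive integer `r`. -/
def ordOst (α : ℝ) (r : ℕ) : ℕ := sInf {N | ∃ c, IsOstrowski α r N c}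

/-- `s(y) = 2 χ_{[0,1/2)}({y}) - 1`. -/
def sfun (y : ℝ) : ℝ := if Int.fract y < 1 / 2 then 1 else -1

/-- `S_n(α, β) = ∑_{r=0}^n s({r α + β})`. -/
def Sgen (α β : ℝ) (n : ℕ) : ℝ := ∑ r ∈ Finset.range (n + 1), sfun ((r : ℝ) * α + β)

/-- `S_n(α) = S_n(α, 0)`. -/
def Ssum (α : ℝ) (n : ℕ) : ℝ := Sgen α 0 n

/-- `max_{0 ≤ n ≤ r} S_n(α)`. -/
def maxS (α : ℝ) (r : ℕ) : ℝ := sSup (Ssum α '' Set.Iic r)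

/-- `min_{0 ≤ n ≤ r} S_n(α)`. -/
def minS (α : ℝ) (r : ℕ) : ℝ := sInf (Ssum α '' Set.Iic r)

/-- `d_n(α, β) = ∑_{r=0}^{n-1} χ_{[0,β)}({r α}) - β n`. -/
def ddisc (α β : ℝ) (n : ℕ) : ℝ :=
  (∑ r ∈ Finset.range n, if Int.fract ((r : ℝ) * α) < β then (1 : ℝ) else 0) - β * n

/-- `j(r) = max {j + sgn R₁ - 1, 0}` from the decomposition `r = r_{k_j} + R₁ q₁ + R₀`. -/
def jfun (j R1 : ℕ) : ℕ := if R1 = 0 then j - 1 else j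

/-- `i(r) = k_j - j + max {R₁ - 1, 0}` from the decomposition `r = r_{k_j} + R₁ q₁ + R₀`. -/
def ifun (α : ℝ) (j R1 : ℕ) : ℕ := kseq α j - j + (R1 - 1)

/-- `S̃(r)` from the decomposition `r = r_{k_j} + R₁ q₁ + R₀`. -/
def Stil (α : ℝ) (r R1 R0 : ℕ) : ℝ :=
  if R0 = 0 then (if R1 = 0 then sfun ((r : ℝ) * α) else 0)
  else if R1 = 0 then ∑ i ∈ Finset.Icc (r - R0) r, sfun ((i : ℝ) * α)
  else ∑ i ∈ Finset.Icc (r - R0 + 1) r, sfun ((i : ℝ) * α)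

/-- `sup_{β ∈ (0,1)} |d_n(α, β)| = n D_n^*(α)`. -/
def nDsup (α : ℝ) (n : ℕ) : ℝ := sSup ((fun β => |ddisc α β n|) '' Set.Ioo (0 : ℝ) 1)

/-- The discrepancy `D_n^*(α) = sup_{β ∈ (0,1)} |d_n(α, β)| / n`. -/
def Dstar (α : ℝ) (n : ℕ) : ℝ :=
  sSup ((fun β => |ddisc α β n| / (n : ℝ)) '' Set.Ioo (0 : ℝ) 1)

def psi (x : ℝ) : ℝ := Int.fract x - 1 / 2

def FF (α : ℝ) (n : ℕ) (y : ℝ) : ℝ := ∑ r ∈ Finset.range n, psi ((r : ℝ) * α + y)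

lemma psi_add_int (x : ℝ) (k : ℤ) : psi (x + k) = psi x := by
  simp [psi]

lemma psi_le (x : ℝ) : psi x ≤ 1 / 2 := by
  have := (Int.fract_lt_one x).le
  unfold psi; linarith

lemma le_psi (x : ℝ) : -(1 / 2) ≤ psi x := by
  have := Int.fract_nonneg x
  unfold psi; linarith

lemma FF_add (α : ℝ) (m n : ℕ) (y : ℝ) :
    FF α (m + n) y = FF α m y + FF α n (y + m * α) := by
  unfold FF
  rw [Finset.sum_range_add]
  congr 1
  apply Finset.sum_congr rfl
  intro r _
  push_cast
  congr 1
  ring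

lemma FF_congr_int (α : ℝ) (n : ℕ) (y : ℝ) (k : ℤ) : FF α n (y + k) = FF α n y := by
  unfold FF
  apply Finset.sum_congr rfl
  intro r _
  rw [← add_assoc, psi_add_int]

lemma FF_reflect (α : ℝ) (n : ℕ) (y : ℝ) :
    FF α n y = FF (-α) n (y + ((n : ℝ) - 1) * α) := by
  unfold FF
  rw [← Finset.sum_range_reflect]
  apply Finset.sum_congr rfl
  intro r hr
  have hr' := Finset.mem_range.1 hr
  have : ((n - 1 - r : ℕ) : ℝ) = (n : ℝ) - 1 - r := by
    rw [Nat.cast_sub (by omega), Nat.cast_sub (by omega)]; simp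
  rw [this]
  congr 1
  ring

/-- Hermite-type identity. -/
lemma hermite (q : ℕ) (hq : 0 < q) (p : ℤ) (hpq : IsCoprime p (q : ℤ)) (x : ℝ) :
    ∑ s ∈ Finset.range q, psi ((s : ℝ) * (p / q) + x) = psi (q * x) := by
  have hq' : (0 : ℝ) < q := by exact_mod_cast hq
  have hfl : ∀ s : ℕ, Int.fract ((s : ℝ) * (p / q) + x)
      = ((⌊(q : ℝ) * Int.fract ((s : ℝ) * (p / q) + x)⌋₊ : ℝ) + Int.fract (q * x)) / q := by
    intro s
    set w := (s : ℝ) * (p / q) + x with hw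
    have h1 : Int.fract ((q : ℝ) * Int.fract w) = Int.fract (q * x) := by
      have : (q : ℝ) * Int.fract w = q * x + ((s * p - q * ⌊w⌋ : ℤ) : ℝ) := by
        rw [← Int.self_sub_floor w]
        push_cast
        have hwx : (q : ℝ) * w = s * p + q * x := by rw [hw]; field_simp
        rw [mul_sub, hwx]
        ring
      rw [this, Int.fract_add_intCast]
    have h2 : (0 : ℝ) ≤ (q : ℝ) * Int.fract w := by
      have := Int.fract_nonneg w
      positivity
    have h3 := Int.self_sub_floor ((q : ℝ) * Int.fract w)
    have h4 : ((⌊(q : ℝ) * Int.fract w⌋₊ : ℕ) : ℝ) = ((⌊(q : ℝ) * Int.fract w⌋ : ℤ) : ℝ) :=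
      natCast_floor_eq_intCast_floor h2
    rw [h4, ← h1, ← h3]
    field_simp
    ring
  set g : ℕ → ℕ := fun s => ⌊(q : ℝ) * Int.fract ((s : ℝ) * (p / q) + x)⌋₊ with hg
  have hmaps : ∀ s ∈ Finset.range q, g s ∈ Finset.range q := by
    intro s _
    rw [Finset.mem_range, hg]
    simp only
    rw [Nat.floor_lt (by have := Int.fract_nonneg ((s : ℝ) * (p / q) + x); positivity)]
    have := Int.fract_lt_one ((s : ℝ) * (p / q) + x)
    nlinarith
  have hinj : Set.InjOn g (Finset.range q : Set ℕ) := by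
    intro s hs t ht hst
    have hs' : s < q := by simpa using hs
    have ht' : t < q := by simpa using ht
    have e : Int.fract ((s : ℝ) * (p / q) + x) = Int.fract ((t : ℝ) * (p / q) + x) := by
      rw [hfl s, hfl t]
      simp only [hg] at hst
      rw [hst]
    obtain ⟨z, hz⟩ := Int.fract_eq_fract.1 e
    have hz2 : ((s : ℝ) - t) * p = z * q := by
      have : ((s : ℝ) * (p / q) + x) - ((t : ℝ) * (p / q) + x) = ((s : ℝ) - t) * p / q := by ring
      rw [this] at hz
      rw [div_eq_iff hq'.ne'] at hz
      exact hz
    have hz3 : ((s : ℤ) - t) * p = z * q := by exact_mod_cast hz2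
    have hd : (q : ℤ) ∣ (s : ℤ) - t := by
      apply hpq.symm.dvd_of_dvd_mul_right
      exact ⟨z, by rw [hz3]; ring⟩
    have : (s : ℤ) - t = 0 := by
      apply Int.eq_zero_of_abs_lt_dvd hd
      rw [abs_lt]; constructor <;> omega
    omega
  have himg : (Finset.range q).image g = Finset.range q := by
    apply Finset.eq_of_subset_of_card_le
    · intro y hy
      obtain ⟨s, hs, rfl⟩ := Finset.mem_image.1 hy
      exact hmaps s hs
    · rw [Finset.card_image_of_injOn hinj]
  have hsum : ∑ s ∈ Finset.range q, ((g s : ℕ) : ℝ) = ∑ j ∈ Finset.range q, (j : ℝ) := by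
    conv_rhs => rw [← himg]
    rw [Finset.sum_image hinj]
  have hgauss : ∑ j ∈ Finset.range q, (j : ℝ) = (q : ℝ) * (q - 1) / 2 := by
    clear * - 
    induction q with
    | zero => simp
    | succ n ih => rw [Finset.sum_range_succ, ih]; push_cast; ring
  unfold psi
  rw [Finset.sum_sub_distrib, Finset.sum_congr rfl (fun s _ => hfl s), ← Finset.sum_div,
    Finset.sum_add_distrib]
  simp only [hg] at hsum
  rw [hsum, hgauss]
  simp
  field_simp
  ring

lemma FF_block (α : ℝ) (c q : ℕ) (p : ℤ) (y : ℝ) :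
    FF α (c * q) y = ∑ b ∈ Finset.range c, FF α q (y + b * (q * α - p)) := by
  induction c with
  | zero => simp [FF]
  | succ c ih =>
    rw [Nat.succ_mul, FF_add, ih, Finset.sum_range_succ]
    congr 1
    rw [← FF_congr_int α q (y + c * (q * α - p)) (c * p)]
    congr 1
    push_cast
    ring

/-- Comparison of a run of blocks with the sawtooth sum. -/
lemma block_compare (α : ℝ) (c q : ℕ) (hq : 0 < q) (p : ℤ) (hpq : IsCoprime p (q : ℤ))
    (y : ℝ) (hδ : 0 < q * α - p) (hc : c * (q * (q * α - p)) ≤ 1) :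
    |FF α (c * q) y - ∑ b ∈ Finset.range c, psi (q * y + b * (q * (q * α - p)))| ≤ 2 := by
  have hq' : (0 : ℝ) < q := by exact_mod_cast hq
  set δ := q * α - p with hδdef
  have hα : α = p / q + δ / q := by rw [hδdef]; field_simp; ring
  have key : ∀ x : ℝ, FF α q x ≤ psi (q * x) + q * δ ∧
      psi (q * (x + δ)) - q * δ ≤ FF α q x := by
    intro x
    rw [← hermite q hq p hpq, ← hermite q hq p hpq]
    have hcard : (q : ℝ) * δ = ∑ s ∈ Finset.range q, δ := by simp
    rw [hcard, ← Finset.sum_add_distrib, ← Finset.sum_sub_distrib]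
    have hb : ∀ s ∈ Finset.range q, 0 ≤ (s : ℝ) * (δ / q) ∧ (s : ℝ) * (δ / q) ≤ δ := by
      intro s hs
      have : (s : ℝ) ≤ q := by exact_mod_cast (Finset.mem_range.1 hs).le
      refine ⟨by positivity, ?_⟩
      rw [mul_div_assoc', div_le_iff₀ hq']
      nlinarith
    constructor
    · apply Finset.sum_le_sum
      intro s hs
      obtain ⟨h1, h2⟩ := hb s hs
      have hm : ⌊(s : ℝ) * (p / q) + x⌋ ≤ ⌊(s : ℝ) * α + x⌋ := by
        apply Int.floor_mono
        rw [hα]; nlinarith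
      have hm' : ((⌊(s : ℝ) * (p / q) + x⌋ : ℤ) : ℝ) ≤ (⌊(s : ℝ) * α + x⌋ : ℤ) := by
        exact_mod_cast hm
      unfold psi
      rw [← Int.self_sub_floor, ← Int.self_sub_floor]
      have : (s : ℝ) * α = s * (p / q) + s * (δ / q) := by
        conv_lhs => rw [hα]
        ring
      linarith
    · apply Finset.sum_le_sum
      intro s hs
      obtain ⟨h1, h2⟩ := hb s hs
      have h3 : (s : ℝ) * α = s * (p / q) + s * (δ / q) := by
        conv_lhs => rw [hα]
        ring
      have hm : ⌊(s : ℝ) * α + x⌋ ≤ ⌊(s : ℝ) * (p / q) + (x + δ)⌋ := by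
        apply Int.floor_mono
        rw [h3]; linarith
      have hm' : ((⌊(s : ℝ) * α + x⌋ : ℤ) : ℝ) ≤ (⌊(s : ℝ) * (p / q) + (x + δ)⌋ : ℤ) := by
        exact_mod_cast hm
      unfold psi
      rw [← Int.self_sub_floor, ← Int.self_sub_floor]
      linarith
  rw [FF_block α c q p y, ← hδdef]
  have hup : ∑ b ∈ Finset.range c, FF α q (y + b * δ) ≤
      ∑ b ∈ Finset.range c, (psi (q * y + b * (q * δ)) + q * δ) := by
    apply Finset.sum_le_sum
    intro b _
    have := (key (y + b * δ)).1
    rw [show (q : ℝ) * (y + b * δ) = q * y + b * (q * δ) by ring] at this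
    exact this
  have hlo : ∑ b ∈ Finset.range c, (psi (q * y + ((b + 1 : ℕ) : ℝ) * (q * δ)) - q * δ) ≤
      ∑ b ∈ Finset.range c, FF α q (y + b * δ) := by
    apply Finset.sum_le_sum
    intro b _
    have := (key (y + b * δ)).2
    rw [show (q : ℝ) * (y + b * δ + δ) = q * y + ((b + 1 : ℕ) : ℝ) * (q * δ) by
      push_cast; ring] at this
    exact this
  rw [Finset.sum_add_distrib] at hup
  rw [Finset.sum_sub_distrib] at hlo
  simp only [Finset.sum_const, Finset.card_range, nsmul_eq_mul] at hup hlo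
  have htel := Finset.sum_range_succ (fun b : ℕ => psi (q * y + (b : ℝ) * (q * δ))) c
  rw [Finset.sum_range_succ'] at htel
  have i1 := psi_le (q * y + (0 : ℕ) * (q * δ))
  have i2 := le_psi (q * y + c * (q * δ))
  generalize psi (q * y + (0 : ℕ) * (q * δ)) = A1 at *
  generalize psi (q * y + c * (q * δ)) = A2 at *
  generalize ∑ x ∈ Finset.range c, psi (q * y + ((x + 1 : ℕ) : ℝ) * (q * δ)) = A3 at *
  rw [abs_le]
  constructor <;> linarith

def Ppot (x : ℝ) : ℝ := (Int.fract x ^ 2 - Int.fract x) / 2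

lemma Ppot_step (x θ : ℝ) (h0 : 0 < θ) (h1 : θ ≤ 1) :
    θ * psi x ≤ Ppot (x + θ) - Ppot x + θ * ((⌊x + θ⌋ : ℝ) - ⌊x⌋) ∧
    Ppot (x + θ) - Ppot x - θ ^ 2 / 2 ≤ θ * psi x := by
  have hu0 := Int.fract_nonneg x
  have hu1 := Int.fract_lt_one x
  have hx := Int.self_sub_floor x
  have hxt := Int.self_sub_floor (x + θ)
  rcases lt_or_ge (Int.fract x + θ) 1 with h | h
  · have hf : ⌊x + θ⌋ = ⌊x⌋ := by
      rw [Int.floor_eq_iff]; constructor <;> linarith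
    have : Int.fract (x + θ) = Int.fract x + θ := by rw [← hxt, hf]; linarith
    unfold Ppot psi
    rw [this, hf]
    constructor <;> nlinarith
  · have hf : ⌊x + θ⌋ = ⌊x⌋ + 1 := by
      rw [Int.floor_eq_iff]; push_cast; constructor <;> linarith
    have : Int.fract (x + θ) = Int.fract x + θ - 1 := by rw [← hxt, hf]; push_cast; linarith
    unfold Ppot psi
    rw [this, hf]
    push_cast
    constructor <;> nlinarith

lemma Ppot_bd (x : ℝ) : -(1 / 8) ≤ Ppot x ∧ Ppot x ≤ 0 := by
  have hu0 := Int.fract_nonneg x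
  have hu1 := Int.fract_lt_one x
  unfold Ppot
  constructor <;> nlinarith [sq_nonneg (Int.fract x - 1 / 2)]

lemma saw_sum (a c : ℕ) (hca : c ≤ a) (x θ : ℝ) (h0 : 0 < θ) (h1 : θ ≤ 1) (ha : a * θ ≤ 1)
    (ha2 : 1 ≤ (a + 2) * θ) :
    |∑ b ∈ Finset.range c, psi (x + b * θ)| ≤ a / 8 + 3 := by
  have hc : (c : ℝ) * θ ≤ 1 := by
    have : (c : ℝ) ≤ a := by exact_mod_cast hca
    nlinarith
  have key : ∀ c : ℕ, θ * ∑ b ∈ Finset.range c, psi (x + b * θ) ≤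
      Ppot (x + c * θ) - Ppot x + θ * ((⌊x + c * θ⌋ : ℝ) - ⌊x⌋) ∧
      Ppot (x + c * θ) - Ppot x - c * (θ ^ 2 / 2) ≤
        θ * ∑ b ∈ Finset.range c, psi (x + b * θ) := by
    intro c
    induction c with
    | zero => simp
    | succ c ih =>
      rw [Finset.sum_range_succ, mul_add]
      have hs := Ppot_step (x + c * θ) θ h0 h1
      have e : x + ((c + 1 : ℕ) : ℝ) * θ = x + c * θ + θ := by push_cast; ring
      rw [e]
      push_cast
      constructor
      · linarith [ih.1, hs.1]
      · linarith [ih.2, hs.2]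
  obtain ⟨k1, k2⟩ := key c
  have b1 := Ppot_bd x
  have b2 := Ppot_bd (x + c * θ)
  have hfl : ((⌊x + c * θ⌋ : ℝ) - ⌊x⌋) ≤ 2 := by
    have := Int.floor_le (x + c * θ)
    have := Int.lt_floor_add_one x
    linarith
  rw [abs_le]
  constructor
  · by_contra hcon
    push Not at hcon
    nlinarith
  · by_contra hcon
    push Not at hcon
    nlinarith

lemma block_bound (α : ℝ) (a c q : ℕ) (hca : c ≤ a) (ha1 : 1 ≤ a)
    (hq : 0 < q) (p : ℤ) (hpq : IsCoprime p (q : ℤ))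
    (y : ℝ) (hδ : 0 < q * α - p) (ha : a * (q * (q * α - p)) ≤ 1)
    (ha2 : 1 ≤ (a + 2) * (q * (q * α - p))) :
    |FF α (c * q) y| ≤ a / 8 + 5 := by
  have hq' : (0 : ℝ) < q := by exact_mod_cast hq
  have hθ : 0 < q * (q * α - p) := by positivity
  have hac : (c : ℝ) ≤ a := by exact_mod_cast hca
  have ha1' : (1 : ℝ) ≤ a := by exact_mod_cast ha1
  have h1 := block_compare α c q hq p hpq y hδ (by nlinarith)
  have h2 := saw_sum a c hca (q * y) _ hθ (by nlinarith) ha ha2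
  rw [abs_le] at *
  constructor <;> linarith

/-- Upper bound for half-runs starting near `0`. -/
lemma block_half (α : ℝ) (a q : ℕ) (ha1 : 1 ≤ a)
    (hq : 0 < q) (p : ℤ) (hpq : IsCoprime p (q : ℤ))
    (y : ℝ) (hδ : 0 < q * α - p) (ha : a * (q * (q * α - p)) ≤ 1)
    (hy0 : 0 ≤ y) (hy : y ≤ q * α - p) :
    FF α (((a + 1) / 2) * q) y ≤ - a / 8 + 3 := by
  have hq' : (0 : ℝ) < q := by exact_mod_cast hq
  set θ := q * (q * α - p) with hθd
  have hθ : 0 < θ := by positivity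
  set c := (a + 1) / 2 with hcd
  have hca : c ≤ a := by omega
  have hac : (c : ℝ) ≤ a := by exact_mod_cast hca
  have ha1' : (1 : ℝ) ≤ a := by exact_mod_cast ha1
  have hc1 : (2 : ℝ) * c ≤ a + 1 := by
    have : 2 * c ≤ a + 1 := by omega
    exact_mod_cast this
  have hc2 : (a : ℝ) ≤ 2 * c := by
    have : a ≤ 2 * c := by omega
    exact_mod_cast this
  have h1 := block_compare α c q hq p hpq y hδ (by rw [← hθd]; nlinarith)
  have h2 : ∑ b ∈ Finset.range c, psi (q * y + b * θ) ≤
      ∑ b ∈ Finset.range c, (θ - 1 / 2 + b * θ) := by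
    apply Finset.sum_le_sum
    intro b _
    have hf : (0 : ℤ) ≤ ⌊q * y + b * θ⌋ := by
      apply Int.floor_nonneg.2; positivity
    have hf' : (0 : ℝ) ≤ (⌊q * y + b * θ⌋ : ℤ) := by exact_mod_cast hf
    have : q * y ≤ θ := by rw [hθd]; nlinarith
    unfold psi
    rw [← Int.self_sub_floor]
    linarith
  have h3 : ∑ b ∈ Finset.range c, (θ - 1 / 2 + b * θ) =
      c * (θ - 1 / 2) + θ * (c * (c - 1) / 2) := by
    clear * -
    induction c with
    | zero => simp
    | succ n ih => rw [Finset.sum_range_succ, ih]; push_cast; ring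
  have h4 : (c : ℝ) * θ ≤ 1 := by nlinarith
  have h5 : θ * (c * (c - 1) / 2) ≤ c / 4 := by
    have : θ * ((c : ℝ) - 1) ≤ 1 / 2 := by nlinarith
    have h0c : (0 : ℝ) ≤ c := by positivity
    nlinarith
  rw [abs_le] at h1
  nlinarith

section CF
variable {α : ℝ}

lemma gi_succ (α : ℝ) (m : ℕ) : gaussIter α (m + 1) = Int.fract (gaussIter α m)⁻¹ := by
  unfold gaussIter
  rw [Function.iterate_succ_apply']
  rfl

lemma gi_props (hirr : Irrational α) (h0 : 0 < α) (h1 : α < 1) (m : ℕ) :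
    Irrational (gaussIter α m) ∧ 0 < gaussIter α m ∧ gaussIter α m < 1 := by
  induction m with
  | zero => exact ⟨hirr, h0, h1⟩
  | succ m ih =>
    rw [gi_succ]
    have hi : Irrational (Int.fract (gaussIter α m)⁻¹) := by
      rw [← Int.self_sub_floor]
      exact (irrational_inv_iff.2 ih.1).sub_intCast _
    refine ⟨hi, lt_of_le_of_ne (Int.fract_nonneg _) (Ne.symm hi.ne_zero), Int.fract_lt_one _⟩

lemma pq_pos (hirr : Irrational α) (h0 : 0 < α) (h1 : α < 1) (m : ℕ) : 1 ≤ pq α (m + 1) := by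
  obtain ⟨-, h2, h3⟩ := gi_props hirr h0 h1 m
  unfold pq
  rw [Nat.add_sub_cancel]
  apply Nat.le_floor
  simpa using (one_le_inv₀ h2).2 h3.le

lemma gi_rec (hirr : Irrational α) (h0 : 0 < α) (h1 : α < 1) (m : ℕ) :
    gaussIter α (m + 1) * gaussIter α m = 1 - pq α (m + 1) * gaussIter α m := by
  obtain ⟨-, h2, h3⟩ := gi_props hirr h0 h1 m
  rw [gi_succ, ← Int.self_sub_floor]
  unfold pq
  rw [Nat.add_sub_cancel]
  rw [natCast_floor_eq_intCast_floor (inv_pos.2 h2).le]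
  field_simp

lemma f_zero : fseq α 0 = α := by simp [fseq, qden, pnum]
lemma f_one : fseq α 1 = 1 - pq α 1 * α := by simp [fseq, qden, pnum]
lemma f_rec (m : ℕ) : fseq α (m + 2) = fseq α m - pq α (m + 2) * fseq α (m + 1) := by
  simp only [fseq, qden, pnum]
  push_cast
  ring

lemma f_gi (hirr : Irrational α) (h0 : 0 < α) (h1 : α < 1) (m : ℕ) :
    0 < fseq α m ∧ fseq α (m + 1) = gaussIter α (m + 1) * fseq α m := by
  induction m with
  | zero =>
    refine ⟨by rw [f_zero]; exact h0, ?_⟩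
    have := gi_rec hirr h0 h1 0
    have e : gaussIter α 0 = α := rfl
    rw [e] at this
    rw [f_zero, zero_add, f_one]
    simpa using this.symm
  | succ m ih =>
    obtain ⟨-, h2, h3⟩ := gi_props hirr h0 h1 (m + 1)
    refine ⟨by rw [ih.2]; exact mul_pos h2 ih.1, ?_⟩
    have := gi_rec hirr h0 h1 (m + 1)
    have e : m + 1 + 1 = m + 2 := rfl
    rw [e] at *
    rw [f_rec, ih.2]
    linear_combination (-fseq α m) * this

lemma f_pos (hirr : Irrational α) (h0 : 0 < α) (h1 : α < 1) (m : ℕ) : 0 < fseq α m :=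
  (f_gi hirr h0 h1 m).1

lemma f_anti (hirr : Irrational α) (h0 : 0 < α) (h1 : α < 1) (m : ℕ) :
    fseq α (m + 1) ≤ fseq α m := by
  obtain ⟨-, h2, h3⟩ := gi_props hirr h0 h1 (m + 1)
  have := f_gi hirr h0 h1 m
  rw [this.2]
  nlinarith [this.1]

lemma qf_one (m : ℕ) : qden α (m + 1) * fseq α m + qden α m * fseq α (m + 1) = 1 := by
  induction m with
  | zero => rw [f_zero, zero_add, f_one]; simp [qden]
  | succ m ih =>
    have e : m + 1 + 1 = m + 2 := rfl
    rw [e, f_rec]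
    simp only [qden]
    push_cast
    linear_combination ih

lemma q_pos (hirr : Irrational α) (h0 : 0 < α) (h1 : α < 1) (m : ℕ) :
    0 < qden α m ∧ pq α (m + 1) * qden α m ≤ qden α (m + 1) ∧
      qden α (m + 1) ≤ (pq α (m + 1) + 1) * qden α m := by
  induction m with
  | zero => simp [qden]
  | succ m ih =>
    have hp := pq_pos hirr h0 h1 m
    have hq : qden α m ≤ qden α (m + 1) := by nlinarith
    refine ⟨by omega, ?_, ?_⟩
    · simp [qden]
    · have : qden α (m + 1 + 1) = pq α (m + 2) * qden α (m + 1) + qden α m := rfl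
      rw [this]
      have : pq α (m + 1 + 1) = pq α (m + 2) := rfl
      rw [this]
      nlinarith

lemma q_mono (hirr : Irrational α) (h0 : 0 < α) (h1 : α < 1) (m : ℕ) :
    qden α m ≤ qden α (m + 1) := by
  have := q_pos hirr h0 h1 m
  have hp := pq_pos hirr h0 h1 m
  nlinarith

lemma theta_bds (hirr : Irrational α) (h0 : 0 < α) (h1 : α < 1) (m : ℕ) :
    pq α (m + 1) * (qden α m * fseq α m) ≤ 1 ∧
    1 ≤ (pq α (m + 1) + 2) * (qden α m * fseq α m) := by
  obtain ⟨hq, hq1, hq2⟩ := q_pos hirr h0 h1 m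
  have f1 := f_pos hirr h0 h1 m
  have f2 := f_pos hirr h0 h1 (m + 1)
  have f3 := f_anti hirr h0 h1 m
  have e := qf_one (α := α) m
  have hq' : (0 : ℝ) < qden α m := by exact_mod_cast hq
  have hq1' : (pq α (m + 1) : ℝ) * qden α m ≤ qden α (m + 1) := by exact_mod_cast hq1
  have hq2' : (qden α (m + 1) : ℝ) ≤ (pq α (m + 1) + 1) * qden α m := by exact_mod_cast hq2
  constructor
  · nlinarith [mul_pos hq' f2]
  · nlinarith [mul_le_mul_of_nonneg_left f3 hq'.le]

lemma det_id (m : ℕ) : (qden α m : ℤ) * pnum α (m + 1) - qden α (m + 1) * pnum α m = (-1) ^ m := by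
  induction m with
  | zero => simp [qden, pnum]
  | succ m ih =>
    have e : m + 1 + 1 = m + 2 := rfl
    rw [e]
    simp only [qden, pnum]
    push_cast
    rw [pow_succ, ← ih]
    ring

lemma cop (m : ℕ) : IsCoprime (pnum α m : ℤ) (qden α m : ℤ) := by
  have h := det_id (α := α) m
  have h2 : ((-1 : ℤ) ^ m) * (-1) ^ m = 1 := by rw [← mul_pow]; simp
  refine ⟨-(-1) ^ m * qden α (m + 1), (-1) ^ m * pnum α (m + 1), ?_⟩
  linear_combination ((-1) ^ m) * h + h2

lemma delta_even (m : ℕ) (hm : Even m) :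
    (qden α m : ℝ) * α - ((pnum α m : ℤ) : ℝ) = fseq α m := by
  simp [fseq, hm.neg_one_pow]

lemma delta_odd (m : ℕ) (hm : Odd m) :
    (qden α m : ℝ) * (-α) - ((-(pnum α m : ℤ) : ℤ) : ℝ) = fseq α m := by
  simp [fseq, hm.neg_one_pow]
  ring

lemma level_bound (hirr : Irrational α) (h0 : 0 < α) (h1 : α < 1) (m c : ℕ)
    (hc : c ≤ pq α (m + 1)) (y : ℝ) :
    |FF α (c * qden α m) y| ≤ pq α (m + 1) / 8 + 5 := by
  obtain ⟨t1, t2⟩ := theta_bds hirr h0 h1 m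
  have hq := (q_pos hirr h0 h1 m).1
  have hf := f_pos hirr h0 h1 m
  have hp := pq_pos hirr h0 h1 m
  rcases Nat.even_or_odd m with hm | hm
  · have e := delta_even (α := α) m hm
    exact block_bound α _ c _ hc hp hq (pnum α m) (cop m) y (by rw [e]; exact hf)
      (by rw [e]; exact t1) (by rw [e]; exact t2)
  · have e := delta_odd (α := α) m hm
    rw [FF_reflect]
    exact block_bound (-α) _ c _ hc hp hq (-(pnum α m)) (cop m).neg_left _ (by rw [e]; exact hf)
      (by rw [e]; exact t1) (by rw [e]; exact t2)

lemma total_bound (hirr : Irrational α) (h0 : 0 < α) (h1 : α < 1) (c : ℕ → ℕ)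
    (hc : ∀ h, c h ≤ pq α (h + 1)) (N : ℕ) (y : ℝ) :
    |FF α (∑ h ∈ Finset.range N, c h * qden α h) y| ≤
      ∑ h ∈ Finset.range N, ((pq α (h + 1) : ℝ) / 8 + 5) := by
  induction N generalizing y with
  | zero => simp [FF]
  | succ N ih =>
    rw [Finset.sum_range_succ, Finset.sum_range_succ, FF_add]
    refine (abs_add_le _ _).trans (add_le_add (ih y) (level_bound hirr h0 h1 N _ (hc N) _))

lemma ddisc_eq (n : ℕ) (β : ℝ) (hβ : β ∈ Set.Ioo (0 : ℝ) 1) :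
    ddisc α β n = FF α n (-β) - FF α n 0 := by
  unfold ddisc FF
  rw [← Finset.sum_sub_distrib]
  have : β * (n : ℝ) = ∑ r ∈ Finset.range n, β := by simp [mul_comm]
  rw [this, ← Finset.sum_sub_distrib]
  apply Finset.sum_congr rfl
  intro r _
  rw [add_zero]
  set x := (r : ℝ) * α
  have hx := Int.self_sub_floor x
  have hx0 := Int.fract_nonneg x
  have hx1 := Int.fract_lt_one x
  obtain ⟨hb0, hb1⟩ := hβ
  unfold psi
  split_ifs with h
  · have : ⌊x + -β⌋ = ⌊x⌋ - 1 := by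
      rw [Int.floor_eq_iff]; push_cast; constructor <;> linarith
    rw [← Int.self_sub_floor (x + -β), this]
    push_cast
    linarith
  · push Not at h
    have : ⌊x + -β⌋ = ⌊x⌋ := by
      rw [Int.floor_eq_iff]; constructor <;> linarith
    rw [← Int.self_sub_floor (x + -β), this]
    linarith

lemma psi_neg (x : ℝ) (hx : Irrational x) : psi (-x) = -psi x := by
  unfold psi
  rw [Int.fract_neg]
  · ring
  · intro h
    have := Int.self_sub_floor x
    rw [h] at this
    exact hx.ne_int _ (sub_eq_zero.1 this)

lemma irr_mul (hirr : Irrational α) (n : ℕ) (hn : n ≠ 0) : Irrational ((n : ℝ) * α) := by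
  rw [mul_comm]; exact hirr.mul_natCast hn

lemma FF_neg (hirr : Irrational α) (n : ℕ) (hn : 0 < n) :
    FF (-α) n 0 = -FF α n 0 - 1 := by
  obtain ⟨k, rfl⟩ : ∃ k, n = k + 1 := ⟨n - 1, by omega⟩
  unfold FF
  rw [Finset.sum_range_succ', Finset.sum_range_succ']
  have : ∀ r ∈ Finset.range k, psi (((r + 1 : ℕ) : ℝ) * (-α) + 0) =
      - psi (((r + 1 : ℕ) : ℝ) * α + 0) := by
    intro r _
    rw [← psi_neg _ (by rw [add_zero]; exact irr_mul hirr _ (by omega))]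
    congr 1; ring
  rw [Finset.sum_congr rfl this, Finset.sum_neg_distrib]
  simp [psi]
  ring

lemma FF_shift (hirr : Irrational α) (n : ℕ) :
    |FF α n (-(n * α)) + FF α n 0| ≤ 1 := by
  have e1 : FF α n (-(n * α)) = FF (-α) n (-α) := by
    rw [FF_reflect]; congr 1; ring
  have e2 : FF (-α) n (-α) = - FF α n α := by
    unfold FF
    rw [← Finset.sum_neg_distrib]
    apply Finset.sum_congr rfl
    intro r _
    rw [← psi_neg]
    · congr 1; ring
    · have := irr_mul hirr (r + 1) (by omega)
      push_cast at this
      rw [add_mul, one_mul] at this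
      exact this
  have e3 : FF α n α + psi 0 = FF α n 0 + psi (n * α) := by
    have a1 := FF_add α 1 n 0
    have a2 := FF_add α n 1 0
    rw [add_comm 1 n, a2] at a1
    have b : ∀ y, FF α 1 y = psi y := by intro y; simp [FF]
    rw [b, b] at a1
    simp at a1
    linarith
  rw [e1, e2]
  have := psi_le 0
  have := le_psi 0
  have := psi_le (n * α)
  have := le_psi (n * α)
  rw [abs_le]; constructor <;> linarith

lemma nDsup_bdd (n : ℕ) : BddAbove ((fun β => |ddisc α β n|) '' Set.Ioo (0 : ℝ) 1) := by
  refine ⟨n, ?_⟩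
  rintro _ ⟨β, hβ, rfl⟩
  simp only
  rw [ddisc_eq n β hβ]
  have : ∀ y, |FF α n y| ≤ n / 2 := by
    intro y
    unfold FF
    refine (Finset.abs_sum_le_sum_abs _ _).trans ?_
    refine (Finset.sum_le_sum (g := fun _ => (1 / 2 : ℝ)) ?_).trans ?_
    · intro r _
      rw [abs_le]
      exact ⟨le_psi _, psi_le _⟩
    · simp; linarith
  have h1 := this (-β)
  have h2 := this 0
  rw [abs_le] at *
  constructor <;> linarith

lemma nDsup_nonneg (n : ℕ) : 0 ≤ nDsup α n := by
  apply Real.sSup_nonneg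
  rintro _ ⟨β, hβ, rfl⟩
  exact abs_nonneg _

lemma nDsup_ge (hirr : Irrational α) (n : ℕ) (hn : 0 < n) : 2 * |FF α n 0| - 1 ≤ nDsup α n := by
  have hi := irr_mul hirr n hn.ne'
  set β := Int.fract ((n : ℝ) * α) with hβd
  have hβ : β ∈ Set.Ioo (0 : ℝ) 1 := by
    refine ⟨lt_of_le_of_ne (Int.fract_nonneg _) ?_, Int.fract_lt_one _⟩
    intro h
    have := Int.self_sub_floor ((n : ℝ) * α)
    rw [← hβd, ← h] at this
    exact hi.ne_int _ (sub_eq_zero.1 this)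
  refine le_trans ?_ (le_csSup (nDsup_bdd n) ⟨β, hβ, rfl⟩)
  simp only
  rw [ddisc_eq n β hβ]
  have e : FF α n (-β) = FF α n (-(n * α)) := by
    rw [← FF_congr_int α n (-(n * α)) ⌊(n : ℝ) * α⌋]
    congr 1
    rw [hβd, ← Int.self_sub_floor]
    ring
  rw [e]
  have h := FF_shift hirr n
  rw [abs_le] at h
  rcases abs_cases (FF α n 0) with h1 | h1 <;>
  rcases abs_cases (FF α n (-(n * α)) - FF α n 0) with h2 | h2 <;> linarith

/-- partial sums -/
def SS (α : ℝ) (k : ℕ) : ℝ := ∑ m ∈ Finset.Icc 1 k, (pq α m : ℝ)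

lemma SS_succ (k : ℕ) : SS α (k + 1) = SS α k + pq α (k + 1) := by
  unfold SS
  rw [Finset.sum_Icc_succ_top (by omega)]

lemma SS_range (k : ℕ) : SS α k = ∑ h ∈ Finset.range k, (pq α (h + 1) : ℝ) := by
  induction k with
  | zero => simp [SS]
  | succ k ih => rw [SS_succ, ih, Finset.sum_range_succ]

lemma SS_mono : Monotone (SS α) := by
  apply monotone_nat_of_le_succ
  intro k
  rw [SS_succ]
  have : (0 : ℝ) ≤ pq α (k + 1) := by positivity
  linarith

lemma SS_ge (hirr : Irrational α) (h0 : 0 < α) (h1 : α < 1) (k : ℕ) : (k : ℝ) ≤ SS α k := by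
  induction k with
  | zero => simp [SS]
  | succ k ih =>
    rw [SS_succ]
    have : (1 : ℝ) ≤ pq α (k + 1) := by exact_mod_cast pq_pos hirr h0 h1 k
    push_cast; linarith

/-- existence of Ostrowski-type digits -/
lemma ost_digits (hirr : Irrational α) (h0 : 0 < α) (h1 : α < 1) (N : ℕ) :
    (∀ r < qden α N, ∃ c : ℕ → ℕ, r = ∑ h ∈ Finset.range N, c h * qden α h ∧
      (∀ h, c h ≤ pq α (h + 1)) ∧ (∀ h, c (h + 1) = pq α (h + 2) → c h = 0) ∧
      ∀ h, N ≤ h → c h = 0) ∧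
    (∀ r < qden α (N + 1), ∃ c : ℕ → ℕ, r = ∑ h ∈ Finset.range (N + 1), c h * qden α h ∧
      (∀ h, c h ≤ pq α (h + 1)) ∧ (∀ h, c (h + 1) = pq α (h + 2) → c h = 0) ∧
      ∀ h, N + 1 ≤ h → c h = 0) := by
  induction N with
  | zero =>
    constructor
    · intro r hr
      refine ⟨fun _ => 0, ?_⟩
      simp [qden] at hr
      simp [hr]
    · intro r hr
      refine ⟨fun h => if h = 0 then r else 0, ?_⟩
      simp only [zero_add, qden] at hr
      refine ⟨by simp [qden], ?_, ?_, ?_⟩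
      · intro h
        simp only
        split_ifs with hh
        · subst hh; exact hr.le
        · omega
      · intro h hh
        have := pq_pos hirr h0 h1 (h + 1)
        simp only at hh
        rw [if_neg (by omega)] at hh
        exact absurd hh (by have e : pq α (h + 1 + 1) = pq α (h + 2) := rfl
                            omega)
      · intro h hh
        simp only
        rw [if_neg (by omega)]
  | succ N ih =>
    refine ⟨ih.2, ?_⟩
    intro r hr
    have e2 : qden α (N + 1 + 1) = pq α (N + 2) * qden α (N + 1) + qden α N := rfl
    have hqN := q_mono hirr h0 h1 N
    have hq1 := (q_pos hirr h0 h1 (N + 1)).1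
    set Q := qden α (N + 1) with hQ
    have hdm := Nat.div_add_mod r Q
    have hml := Nat.mod_lt r hq1
    have hle : r / Q ≤ pq α (N + 2) := by
      rw [← Nat.lt_succ_iff, Nat.div_lt_iff_lt_mul hq1]
      rw [e2] at hr
      have : (pq α (N + 2)).succ * Q = pq α (N + 2) * Q + Q := Nat.succ_mul _ _
      omega
    -- digits of the remainder, with vanishing top digit if necessary
    have hrem : ∃ c : ℕ → ℕ, r % Q = ∑ h ∈ Finset.range (N + 1), c h * qden α h ∧
      (∀ h, c h ≤ pq α (h + 1)) ∧ (∀ h, c (h + 1) = pq α (h + 2) → c h = 0) ∧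
      (∀ h, N + 1 ≤ h → c h = 0) ∧ (r / Q = pq α (N + 2) → c N = 0) := by
      by_cases htop : r / Q = pq α (N + 2)
      · have : r % Q < qden α N := by
          rw [htop] at hdm
          rw [e2] at hr
          have : Q * pq α (N + 2) = pq α (N + 2) * Q := mul_comm _ _
          omega
        obtain ⟨c, c1, c2, c3, c4⟩ := ih.1 _ this
        refine ⟨c, ?_, c2, c3, fun h hh => c4 h (by omega), fun _ => c4 N le_rfl⟩
        rw [Finset.sum_range_succ, c4 N le_rfl, zero_mul, add_zero]
        exact c1
      · obtain ⟨c, c1, c2, c3, c4⟩ := ih.2 _ hml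
        exact ⟨c, c1, c2, c3, c4, fun h => absurd h htop⟩
    obtain ⟨c, c1, c2, c3, c4, c5⟩ := hrem
    refine ⟨fun h => if h = N + 1 then r / Q else c h, ?_, ?_, ?_, ?_⟩
    · rw [Finset.sum_range_succ]
      have : ∑ h ∈ Finset.range (N + 1), (if h = N + 1 then r / Q else c h) * qden α h =
          ∑ h ∈ Finset.range (N + 1), c h * qden α h := by
        apply Finset.sum_congr rfl
        intro h hh
        rw [if_neg (by have := Finset.mem_range.1 hh; omega)]
      rw [this, ← c1]
      simp only
      rw [if_pos trivial, ← hQ, mul_comm]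
      omega
    · intro h
      simp only
      split_ifs with hh
      · subst hh; exact hle
      · exact c2 h
    · intro h
      simp only
      intro hh
      by_cases e : h = N
      · subst e
        rw [if_pos rfl] at hh
        rw [if_neg (by omega)]
        exact c5 hh
      · rw [if_neg (by omega)] at hh
        by_cases e' : h = N + 1
        · subst e'
          rw [c4 _ (by omega)] at hh
          have : 1 ≤ pq α (N + 1 + 2) := pq_pos hirr h0 h1 (N + 1 + 1)
          omega
        · rw [if_neg e']
          exact c3 h hh
    · intro h hh
      simp only
      rw [if_neg (by omega)]
      exact c4 h (by omega)

lemma q_ge (hirr : Irrational α) (h0 : 0 < α) (h1 : α < 1) (N : ℕ) : N ≤ qden α N := by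
  have : ∀ N, N ≤ qden α N ∧ N + 1 ≤ qden α (N + 1) := by
    intro N
    induction N with
    | zero => simpa [qden] using pq_pos hirr h0 h1 0
    | succ N ih =>
      refine ⟨ih.2, ?_⟩
      have e2 : qden α (N + 1 + 1) = pq α (N + 2) * qden α (N + 1) + qden α N := rfl
      have : 1 ≤ pq α (N + 2) := pq_pos hirr h0 h1 (N + 1)
      have := (q_pos hirr h0 h1 N).1
      rw [e2]
      nlinarith
  exact (this N).1

lemma ost_exists (hirr : Irrational α) (h0 : 0 < α) (h1 : α < 1) (r : ℕ) (hr : 0 < r) :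
    ∃ N c, IsOstrowski α r N c := by
  obtain ⟨c, c1, c2, c3, c4⟩ := (ost_digits hirr h0 h1 (r + 1)).1 r
    (lt_of_lt_of_le (Nat.lt_succ_self r) (q_ge hirr h0 h1 (r + 1)))
  have hex : ∃ h ≤ r, c h ≠ 0 := by
    by_contra hcon
    push Not at hcon
    have : ∑ h ∈ Finset.range (r + 1), c h * qden α h = 0 := by
      apply Finset.sum_eq_zero
      intro h hh
      rw [hcon h (by have := Finset.mem_range.1 hh; omega), zero_mul]
    omega
  obtain ⟨k, hk, hk'⟩ := hex
  set N := Nat.findGreatest (fun h => c h ≠ 0) r with hN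
  have hcN : c N ≠ 0 := Nat.findGreatest_spec (P := fun h => c h ≠ 0) hk hk'
  have hNr : N ≤ r := Nat.findGreatest_le r
  have hz : ∀ h, N < h → c h = 0 := by
    intro h hh
    by_cases hhr : h ≤ r
    · have := Nat.findGreatest_is_greatest hh hhr
      simpa using this
    · exact c4 h (by omega)
  refine ⟨N, c, ?_, c2, c3, Nat.pos_of_ne_zero hcN, hz⟩
  refine c1.trans ?_
  symm
  apply Finset.sum_subset
  · intro h hh
    simp only [Finset.mem_range] at *
    omega
  · intro h _ hh
    simp only [Finset.mem_range] at hh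
    rw [hz h (by omega), zero_mul]

lemma upper_bound (hirr : Irrational α) (h0 : 0 < α) (h1 : α < 1) (r : ℕ) (hr : 0 < r) :
    nDsup α (r + 1) ≤ SS α (ordOst α r + 1) / 4 + 11 * ((ordOst α r + 1 : ℕ) : ℝ) ∧
    r ≤ ∑ h ∈ Finset.range (ordOst α r + 1), pq α (h + 1) * qden α h := by
  have hmem : ordOst α r ∈ {N | ∃ c, IsOstrowski α r N c} := by
    apply Nat.sInf_mem
    exact ost_exists hirr h0 h1 r hr
  obtain ⟨c, c1, c2, -⟩ := hmem
  set N := ordOst α r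
  constructor
  · have hF : ∀ y, |FF α (r + 1) y| ≤ SS α (N + 1) / 8 + 5 * ((N + 1 : ℕ) : ℝ) + 1 / 2 := by
      intro y
      have := total_bound hirr h0 h1 c c2 (N + 1) y
      rw [← c1, Finset.sum_add_distrib, ← Finset.sum_div, ← SS_range] at this
      simp only [Finset.sum_const, Finset.card_range, nsmul_eq_mul] at this
      rw [FF_add]
      have b : ∀ y, |FF α 1 y| ≤ 1 / 2 := by
        intro y
        simp only [FF, Finset.sum_range_one]
        rw [abs_le]; exact ⟨le_psi _, psi_le _⟩
      have := b (y + r * α)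
      refine (abs_add_le _ _).trans ?_
      linarith
    unfold nDsup
    apply csSup_le
    · exact Set.Nonempty.image _ ⟨1 / 2, by norm_num, by norm_num⟩
    · rintro _ ⟨β, hβ, rfl⟩
      simp only
      rw [ddisc_eq _ β hβ]
      have h2 := hF (-β)
      have h3 := hF 0
      have : (1 : ℝ) ≤ ((N + 1 : ℕ) : ℝ) := by push_cast; linarith [Nat.cast_nonneg (α := ℝ) N]
      rw [abs_le] at *
      constructor <;> linarith
  · conv_lhs => rw [c1]
    apply Finset.sum_le_sum
    intro h _
    exact Nat.mul_le_mul_right _ (c2 h)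

/-- The special integers for the lower bound. -/
def nspec (α : ℝ) (e j : ℕ) : ℕ :=
  ∑ i ∈ Finset.range j, (pq α (2 * i + e + 1) + 1) / 2 * qden α (2 * i + e)

/-- The generic inductive lower bound. -/
lemma lower_gen (hirr : Irrational α) (h0 : 0 < α) (h1 : α < 1) (e : ℕ) (γ : ℝ) (P : ℕ → ℤ)
    (hcop : ∀ i, IsCoprime (P i) (qden α (2 * i + e) : ℤ))
    (hδ : ∀ i, (qden α (2 * i + e) : ℝ) * γ - P i = fseq α (2 * i + e)) (j : ℕ) :
    ∀ y : ℝ, 0 ≤ y → (∀ i, j = i + 1 → y ≤ fseq α (2 * i + e + 1)) →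
      FF γ (nspec α e j) y ≤ ∑ i ∈ Finset.range j, (-(pq α (2 * i + e + 1) : ℝ) / 8 + 3) := by
  induction j with
  | zero => intro y _ _; simp [nspec, FF]
  | succ j ih =>
    intro y hy0 hy
    have hy' := hy j rfl
    set m := 2 * j + e with hm
    have hf := f_pos hirr h0 h1 m
    have hp := pq_pos hirr h0 h1 m
    have hq := (q_pos hirr h0 h1 m).1
    obtain ⟨t1, -⟩ := theta_bds hirr h0 h1 m
    set c := (pq α (m + 1) + 1) / 2 with hc
    have hca : c ≤ pq α (m + 1) := by omega
    have hca' : (c : ℝ) ≤ pq α (m + 1) := by exact_mod_cast hca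
    have e1 : nspec α e (j + 1) = c * qden α m + nspec α e j := by
      unfold nspec
      rw [Finset.sum_range_succ, add_comm]
    have hd := hδ j
    rw [← hm] at hd
    have b1 := block_half γ (pq α (m + 1)) (qden α m) hp hq (P j) (hcop j) y
      (by rw [hd]; exact hf) (by rw [hd]; exact t1) hy0
      (by rw [hd]; exact hy'.trans (f_anti hirr h0 h1 m))
    have e2 : FF γ (nspec α e j) (y + ((c * qden α m : ℕ) : ℝ) * γ) =
        FF γ (nspec α e j) (y + c * fseq α m) := by
      rw [← FF_congr_int γ _ (y + c * fseq α m) (c * P j)]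
      congr 1
      rw [← hd]
      push_cast
      ring
    have b2 := ih (y + c * fseq α m) (by positivity) (by
      rintro i rfl
      have hr := f_rec (α := α) (2 * i + e + 1)
      have ee : 2 * i + e + 1 + 2 = m + 1 := by omega
      have ee2 : 2 * i + e + 1 + 1 = m := by omega
      rw [ee, ee2] at hr
      nlinarith)
    rw [e1, FF_add, e2, Finset.sum_range_succ]
    linarith

lemma nspec_ord (hirr : Irrational α) (h0 : 0 < α) (h1 : α < 1) (e : ℕ) (he : e ≤ 1) (j : ℕ) :
    ordOst α (nspec α e (j + 1)) ≤ 2 * j + e := by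
  apply Nat.sInf_le
  refine ⟨fun h => if h ≤ 2 * j + e ∧ h % 2 = e then (pq α (h + 1) + 1) / 2 else 0,
    ?_, ?_, ?_, ?_, ?_⟩
  · have : ∀ j, nspec α e (j + 1) = ∑ h ∈ Finset.range (2 * j + e + 1),
        (if h % 2 = e then (pq α (h + 1) + 1) / 2 else 0) * qden α h := by
      intro j
      induction j with
      | zero =>
        interval_cases e
        · simp [nspec]
        · simp [nspec, Finset.sum_range_succ]
      | succ j ih =>
        have e1 : nspec α e (j + 1 + 1) = nspec α e (j + 1) +
            (pq α (2 * (j + 1) + e + 1) + 1) / 2 * qden α (2 * (j + 1) + e) := by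
          unfold nspec
          rw [Finset.sum_range_succ]
        have e2 : 2 * (j + 1) + e + 1 = 2 * j + e + 1 + 1 + 1 := by ring
        have e3 : 2 * (j + 1) + e = 2 * j + e + 1 + 1 := by ring
        rw [e1, e2, Finset.sum_range_succ, Finset.sum_range_succ, ← ih, e3,
          if_neg (by omega), if_pos (by omega)]
        ring
    rw [this j]
    apply Finset.sum_congr rfl
    intro h hh
    have := Finset.mem_range.1 hh
    congr 1
    simp only
    by_cases h2 : h % 2 = e
    · rw [if_pos h2, if_pos ⟨by omega, h2⟩]
    · rw [if_neg h2, if_neg (fun x => h2 x.2)]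
  · intro h
    have := pq_pos hirr h0 h1 h
    simp only
    split_ifs <;> omega
  · intro h hh
    have : 1 ≤ pq α (h + 2) := pq_pos hirr h0 h1 (h + 1)
    simp only at *
    by_cases h2 : h + 1 ≤ 2 * j + e ∧ (h + 1) % 2 = e
    · rw [if_neg (by omega)]
    · rw [if_neg h2] at hh
      omega
  · have := pq_pos hirr h0 h1 (2 * j + e)
    simp only
    rw [if_pos ⟨le_rfl, by omega⟩]
    omega
  · intro h hh
    simp only
    rw [if_neg (by omega)]

lemma nspec_ge (hirr : Irrational α) (h0 : 0 < α) (h1 : α < 1) (e j : ℕ) : j ≤ nspec α e j := by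
  unfold nspec
  calc j = ∑ i ∈ Finset.range j, 1 := by simp
    _ ≤ _ := by
      apply Finset.sum_le_sum
      intro i _
      have := pq_pos hirr h0 h1 (2 * i + e)
      have := (q_pos hirr h0 h1 (2 * i + e)).1
      apply Nat.mul_pos <;> omega

lemma lower_bound (hirr : Irrational α) (h0 : 0 < α) (h1 : α < 1) (e : ℕ) (he : e ≤ 1) (j : ℕ) :
    (∑ i ∈ Finset.range (j + 1), (pq α (2 * i + e + 1) : ℝ)) / 4 - 10 * ((j + 1 : ℕ) : ℝ) ≤
      nDsup α (nspec α e (j + 1) + 1) := by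
  refine le_trans ?_ (nDsup_ge hirr _ (Nat.succ_pos _))
  set n := nspec α e (j + 1) with hn
  have hnpos : 0 < n := lt_of_lt_of_le (Nat.succ_pos j) (nspec_ge hirr h0 h1 e (j + 1))
  have key : (∑ i ∈ Finset.range (j + 1), (pq α (2 * i + e + 1) : ℝ)) / 8 -
      3 * ((j + 1 : ℕ) : ℝ) - 1 ≤ |FF α n 0| := by
    have hs : ∑ i ∈ Finset.range (j + 1), (-(pq α (2 * i + e + 1) : ℝ) / 8 + 3) =
        -((∑ i ∈ Finset.range (j + 1), (pq α (2 * i + e + 1) : ℝ)) / 8) +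
          3 * ((j + 1 : ℕ) : ℝ) := by
      rw [Finset.sum_add_distrib, ← Finset.sum_div, Finset.sum_neg_distrib]
      simp only [Finset.sum_const, Finset.card_range, nsmul_eq_mul]
      ring
    have hy : ∀ i, j + 1 = i + 1 → (0 : ℝ) ≤ fseq α (2 * i + e + 1) :=
      fun i _ => (f_pos hirr h0 h1 _).le
    rcases (by omega : e = 0 ∨ e = 1) with rfl | rfl
    · have := lower_gen hirr h0 h1 0 α (fun i => pnum α (2 * i + 0)) (fun i => cop _)
        (fun i => delta_even _ ⟨i, by ring⟩) (j + 1) 0 le_rfl hy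
      rw [hs, ← hn] at this
      have := neg_abs_le (FF α n 0)
      linarith
    · have := lower_gen hirr h0 h1 1 (-α) (fun i => -(pnum α (2 * i + 1) : ℤ))
        (fun i => (cop _).neg_left)
        (fun i => delta_odd _ ⟨i, by ring⟩) (j + 1) 0 le_rfl hy
      rw [hs, ← hn, FF_neg hirr n hnpos] at this
      have := le_abs_self (FF α n 0)
      linarith
  have h1' : |FF α n 0| - 1 / 2 ≤ |FF α (n + 1) 0| := by
    rw [FF_add]
    have b : |FF α 1 (0 + n * α)| ≤ 1 / 2 := by
      simp only [FF, Finset.sum_range_one]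
      rw [abs_le]; exact ⟨le_psi _, psi_le _⟩
    have := abs_sub_abs_le_abs_sub (FF α n 0) (-FF α 1 (0 + n * α))
    rw [abs_neg, sub_neg_eq_add] at this
    linarith
  have : (1 : ℝ) ≤ ((j + 1 : ℕ) : ℝ) := by push_cast; linarith [Nat.cast_nonneg (α := ℝ) j]
  linarith

lemma parity_sum (e : ℕ) (he : e ≤ 1) (j : ℕ) :
    ∑ m ∈ (Finset.Icc 1 (2 * j + e + 1)).filter (fun m => m % 2 = 1 - e), (pq α m : ℝ) =
      ∑ i ∈ Finset.range (j + 1), (pq α (2 * i + e + 1) : ℝ) := by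
  rw [Finset.sum_filter]
  induction j with
  | zero =>
    interval_cases e
    · simp
    · simp [Finset.sum_Icc_succ_top]
  | succ j ih =>
    have e2 : 2 * (j + 1) + e + 1 = 2 * j + e + 1 + 1 + 1 := by ring
    rw [e2, Finset.sum_Icc_succ_top (by omega), Finset.sum_Icc_succ_top (by omega), ih,
      Finset.sum_range_succ _ (j + 1), e2, if_neg (by omega), if_pos (by omega)]
    ring

end CF

/-- lower half of the theorem for one parity class -/
lemma lower_half {α : ℝ} (hirr : Irrational α) (h0 : 0 < α) (h1 : α < 1) (e : ℕ) (he : e ≤ 1)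
    (ℓ : ℝ)
    (hℓ : ∀ ε > 0, ∀ᶠ k : ℕ in Filter.atTop, ℓ - ε <
      (∑ m ∈ (Finset.Icc 1 k).filter (fun m => m % 2 = 1 - e), (pq α m : ℝ)) / SS α k)
    (hk : ∀ ε > 0, ∀ᶠ k : ℕ in Filter.atTop, (k : ℝ) / SS α k < ε)
    (hb : Filter.IsBoundedUnder (· ≤ ·) Filter.atTop
      (fun n : ℕ => nDsup α n / SS α (ordOst α (n - 1) + 1))) :
    (1 / 4) * ℓ ≤ Filter.limsup
      (fun n : ℕ => nDsup α n / SS α (ordOst α (n - 1) + 1)) Filter.atTop := by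
  apply le_of_forall_pos_sub_le
  intro ε hε
  refine Filter.le_limsup_of_frequently_le ?_ hb
  obtain ⟨K1, hK1⟩ := Filter.eventually_atTop.1 (hℓ ε hε)
  obtain ⟨K2, hK2⟩ := Filter.eventually_atTop.1 (hk (ε / 20) (by positivity))
  rw [Filter.frequently_atTop]
  intro M
  set j := M + K1 + K2 with hj
  refine ⟨nspec α e (j + 1) + 1, ?_, ?_⟩
  · have := nspec_ge hirr h0 h1 e (j + 1)
    omega
  · set k := 2 * j + e + 1 with hkd
    have a1 := hK1 k (by omega)
    have a2 := hK2 k (by omega)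
    rw [hkd, parity_sum e he j, ← hkd] at a1
    have lb := lower_bound hirr h0 h1 e he j
    have hord := nspec_ord hirr h0 h1 e he j
    rw [Nat.add_sub_cancel]
    have hS1 : (1 : ℝ) ≤ SS α (ordOst α (nspec α e (j + 1)) + 1) := by
      refine le_trans ?_ (SS_ge hirr h0 h1 _)
      push_cast; linarith [Nat.cast_nonneg (α := ℝ) (ordOst α (nspec α e (j + 1)))]
    have hmono : SS α (ordOst α (nspec α e (j + 1)) + 1) ≤ SS α k := SS_mono (by omega)
    have hSk : 0 < SS α k := by linarith
    refine le_trans ?_ (div_le_div_of_nonneg_left (nDsup_nonneg _) (by linarith) hmono)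
    rw [le_div_iff₀ hSk]
    rw [lt_div_iff₀ hSk] at a1
    rw [div_lt_iff₀ hSk] at a2
    have hjk : ((j + 1 : ℕ) : ℝ) ≤ k := by exact_mod_cast (by omega)
    linarith

/-- if the partial quotients are unbounded, `ℓ_e² + ℓ_o² > 0` and
`limsup k / ∑_{m=1}^k a_m = 0`, then
`(1/4) max{ℓ_e, ℓ_o} ≤ limsup_n n D_n^*(α) / ∑_{m=1}^{ord(n-1)+1} a_m ≤ 1/4`. -/
theorem discrepancy_limsup (α : ℝ) (hirr : Irrational α) (h0 : 0 < α) (h1 : α < 1)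
    (hub : ∀ B : ℕ, ∃ k, 1 ≤ k ∧ B < pq α k)
    (ℓe ℓo : ℝ)
    (hℓe : ℓe = Filter.liminf (fun k : ℕ =>
      (∑ m ∈ (Finset.Icc 1 k).filter (fun m => Even m), (pq α m : ℝ)) /
        ∑ m ∈ Finset.Icc 1 k, (pq α m : ℝ)) Filter.atTop)
    (hℓo : ℓo = Filter.liminf (fun k : ℕ =>
      (∑ m ∈ (Finset.Icc 1 k).filter (fun m => Odd m), (pq α m : ℝ)) /
        ∑ m ∈ Finset.Icc 1 k, (pq α m : ℝ)) Filter.atTop)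
    (hpos : 0 < ℓe ^ 2 + ℓo ^ 2)
    (hsmall : Filter.limsup (fun k : ℕ =>
      (k : ℝ) / ∑ m ∈ Finset.Icc 1 k, (pq α m : ℝ)) Filter.atTop = 0) :
    (1 / 4) * max ℓe ℓo ≤
      Filter.limsup (fun n : ℕ =>
        nDsup α n / ∑ m ∈ Finset.Icc 1 (ordOst α (n - 1) + 1), (pq α m : ℝ))
        Filter.atTop ∧
    Filter.limsup (fun n : ℕ =>
        nDsup α n / ∑ m ∈ Finset.Icc 1 (ordOst α (n - 1) + 1), (pq α m : ℝ))
        Filter.atTop ≤ 1 / 4 := by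
  have hS : ∀ k, ∑ m ∈ Finset.Icc 1 k, (pq α m : ℝ) = SS α k := fun _ => rfl
  simp only [hS] at hℓe hℓo hsmall ⊢
  have hSnn : ∀ k, 0 ≤ SS α k := fun k => (Nat.cast_nonneg k).trans (SS_ge hirr h0 h1 k)
  -- smallness of `k / S_k`
  have hk1 : ∀ k : ℕ, (k : ℝ) / SS α k ≤ 1 := fun k =>
    div_le_one_of_le₀ (SS_ge hirr h0 h1 k) (hSnn k)
  have hk : ∀ ε > 0, ∀ᶠ k : ℕ in Filter.atTop, (k : ℝ) / SS α k < ε := by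
    intro ε hε
    apply Filter.eventually_lt_of_limsup_lt
    · rw [hsmall]; exact hε
    · exact Filter.isBoundedUnder_of ⟨1, hk1⟩
  -- parity classes
  have hliminf : ∀ (e : ℕ) (ℓ : ℝ), ℓ = Filter.liminf (fun k : ℕ =>
      (∑ m ∈ (Finset.Icc 1 k).filter (fun m => m % 2 = 1 - e), (pq α m : ℝ)) / SS α k)
        Filter.atTop →
      ∀ ε > 0, ∀ᶠ k : ℕ in Filter.atTop, ℓ - ε <
        (∑ m ∈ (Finset.Icc 1 k).filter (fun m => m % 2 = 1 - e), (pq α m : ℝ)) / SS α k := by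
    intro e ℓ hℓ ε hε
    apply Filter.eventually_lt_of_lt_liminf
    · rw [← hℓ]; linarith
    · refine Filter.isBoundedUnder_of ⟨0, fun k => ?_⟩
      exact div_nonneg (Finset.sum_nonneg fun _ _ => Nat.cast_nonneg _) (hSnn k)
  have hE := hliminf 1 ℓe (by rw [hℓe]; simp only [Nat.even_iff, Nat.sub_self])
  have hO := hliminf 0 ℓo (by rw [hℓo]; simp only [Nat.odd_iff, Nat.sub_zero])
  -- the eventual upper bound
  have hup : ∀ ε > 0, ∀ᶠ n : ℕ in Filter.atTop,
      nDsup α n / SS α (ordOst α (n - 1) + 1) ≤ 1 / 4 + ε := by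
    intro ε hε
    obtain ⟨K, hK⟩ := Filter.eventually_atTop.1 (hk (ε / 11) (by positivity))
    rw [Filter.eventually_atTop]
    refine ⟨(∑ h ∈ Finset.range K, pq α (h + 1) * qden α h) + 2, fun n hn => ?_⟩
    obtain ⟨r, rfl⟩ : ∃ r, n = r + 1 := ⟨n - 1, by omega⟩
    rw [Nat.add_sub_cancel]
    obtain ⟨u1, u2⟩ := upper_bound hirr h0 h1 r (by omega)
    have hKk : K ≤ ordOst α r + 1 := by
      by_contra hcon
      push Not at hcon
      have : ∑ h ∈ Finset.range (ordOst α r + 1), pq α (h + 1) * qden α h ≤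
          ∑ h ∈ Finset.range K, pq α (h + 1) * qden α h :=
        Finset.sum_le_sum_of_subset (Finset.range_mono hcon.le)
      omega
    have a := hK _ hKk
    have hSk : 0 < SS α (ordOst α r + 1) := by
      refine lt_of_lt_of_le ?_ (SS_ge hirr h0 h1 _)
      positivity
    rw [div_lt_iff₀ hSk] at a
    rw [div_le_iff₀ hSk]
    linarith
  have hnn : ∀ n : ℕ, 0 ≤ nDsup α n / SS α (ordOst α (n - 1) + 1) := fun n =>
    div_nonneg (nDsup_nonneg n) (hSnn _)
  have hb : Filter.IsBoundedUnder (· ≤ ·) Filter.atTop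
      (fun n : ℕ => nDsup α n / SS α (ordOst α (n - 1) + 1)) :=
    ⟨1 / 4 + 1, by simpa using hup 1 one_pos⟩
  constructor
  · have l1 := lower_half hirr h0 h1 1 le_rfl ℓe hE hk hb
    have l0 := lower_half hirr h0 h1 0 (by norm_num) ℓo hO hk hb
    rcases max_choice ℓe ℓo with h | h <;> rw [h] <;> assumption
  · apply le_of_forall_pos_le_add
    intro ε hε
    refine Filter.limsup_le_of_le ?_ (hup ε hε)
    exact Filter.IsBoundedUnder.isCoboundedUnder_le (Filter.isBoundedUnder_of ⟨0, hnn⟩)
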